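/- arXiv:2506.09877 — 4 statements merged into one kernel-verified Lean document; each statement's English description precedes it below -/
import Mathlib

section
/- Fix k ∈ ℕ. For each N, let X_N = (X_{N,1}, …, X_{N,N}) and Y_N = (Y_{N,1}, …, Y_{N,N}) be random elements of (ℝ^k)^N on a common probability space such that: (i) N^{-1/2}(Σ_{i=1}^N ‖X_{N,i} − Y_{N,i}‖₂²)^{1/2} → 0 in probability; (ii) for every m ∈ ℕ there exists a constant B_m > 0 with P((1/N)Σ_{i=1}^N ‖X_{N,i}‖₂^m ≥ B_m) → 0 and P((1/N)Σ_{i=1}^N ‖Y_{N,i}‖₂^m ≥ B_m) → 0 as N → ∞. Then for every function φ : ℝ^k → ℝ that is pseudo-Lipschitz of some finite order, |(1/N)Σ_{i=1}^N φ(X_{N,i}) − (1/N)Σ_{i=1}^N φ(Y_{N,i})| → 0 in probability as N → ∞. -/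
/-!
The increments satisfy `|φ(Xᵢ) - φ(Yᵢ)| ≤ L Wᵢ ‖Xᵢ - Yᵢ‖` with `Wᵢ = 1 + ‖Xᵢ‖ᵈ + ‖Yᵢ‖ᵈ`. By the
Cauchy–Schwarz inequality for empirical averages, the difference of the averages of `φ` is at most
`L` times the root mean square of `W` times the root mean square distance of the rows. The first
factor is controlled by the empirical moments of order `2d`, hence bounded in probability; the
second one tends to zero in probability; and a product of such factors tends to zero in probability.
-/

open MeasureTheory Filter

noncomputable section

/-- Euclidean norm of a vector given as a function. -/
def vecNorm {k : ℕ} (x : Fin k → ℝ) : ℝ :=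
  Real.sqrt (∑ i, (x i) ^ 2)

/-- Convergence to zero in probability. -/
def TendstoInProb {Ω : Type*} [MeasurableSpace Ω] (μ : Measure Ω) (Z : ℕ → Ω → ℝ) : Prop :=
  ∀ ε : ℝ, 0 < ε → Tendsto (fun N => μ {ω | ε ≤ |Z N ω|}) atTop (nhds 0)

/-- `f : ℝ^m → ℝ` is pseudo-Lipschitz of order `k`. -/
def PseudoLipschitz {m : ℕ} (k : ℕ) (f : (Fin m → ℝ) → ℝ) : Prop :=
  ∃ L : ℝ, ∀ x y : Fin m → ℝ,
    |f x - f y| ≤ L * (1 + (vecNorm x) ^ k + (vecNorm y) ^ k) * vecNorm (fun i => x i - y i)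

open scoped BigOperators

/-- Boundedness in probability (`O_P(1)`, asymptotic tightness) of a sequence of real functions.
Like `TendstoInProb`, it requires neither measurable functions nor a finite measure. -/
def BoundedInProb {Ω : Type*} [MeasurableSpace Ω] (μ : Measure Ω) (Z : ℕ → Ω → ℝ) : Prop :=
  ∀ η : ENNReal, 0 < η → ∃ B : ℝ, ∀ᶠ N in atTop, μ {ω | B ≤ |Z N ω|} ≤ η

section BoundedInProb

variable {Ω : Type*} [MeasurableSpace Ω] {μ : Measure Ω} {Z W : ℕ → Ω → ℝ}

theorem BoundedInProb.of_tendsto_measure_setOf_le {B : ℝ} (hZ : ∀ N ω, 0 ≤ Z N ω)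
    (h : Tendsto (fun N => μ {ω | B ≤ Z N ω}) atTop (nhds 0)) : BoundedInProb μ Z := by
  intro η hη
  refine ⟨B, ?_⟩
  simpa only [abs_of_nonneg (hZ _ _)] using ENNReal.tendsto_nhds_zero.1 h η hη

theorem BoundedInProb.add (hZ : BoundedInProb μ Z) (hW : BoundedInProb μ W) :
    BoundedInProb μ (fun N ω => Z N ω + W N ω) := by
  intro η hη
  obtain ⟨B, hB⟩ := hZ (η / 2) (ENNReal.half_pos hη.ne')
  obtain ⟨C, hC⟩ := hW (η / 2) (ENNReal.half_pos hη.ne')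
  refine ⟨B + C, ?_⟩
  filter_upwards [hB, hC] with N hBN hCN
  have hsubset : {ω | B + C ≤ |Z N ω + W N ω|} ⊆ {ω | B ≤ |Z N ω|} ∪ {ω | C ≤ |W N ω|} := by
    rintro ω (hω : B + C ≤ |Z N ω + W N ω|)
    exact le_or_le_of_add_le_add (hω.trans (abs_add_le _ _))
  calc μ {ω | B + C ≤ |Z N ω + W N ω|}
      ≤ μ {ω | B ≤ |Z N ω|} + μ {ω | C ≤ |W N ω|} :=
        (measure_mono hsubset).trans (measure_union_le _ _)
    _ ≤ η / 2 + η / 2 := add_le_add hBN hCN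
    _ = η := ENNReal.add_halves η

theorem BoundedInProb.continuous_comp {f : ℝ → ℝ} (hf : Continuous f) (hZ : BoundedInProb μ Z) :
    BoundedInProb μ (fun N ω => f (Z N ω)) := by
  intro η hη
  obtain ⟨B, hB⟩ := hZ η hη
  obtain ⟨C, hC⟩ := isCompact_Icc.exists_bound_of_continuousOn (s := Set.Icc (-B) B) hf.continuousOn
  refine ⟨C + 1, hB.mono fun N hN => (measure_mono ?_).trans hN⟩
  rintro ω (hω : C + 1 ≤ |f (Z N ω)|)
  by_contra hZω
  have hmem : Z N ω ∈ Set.Icc (-B) B := abs_le.1 (not_le.1 hZω).le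
  exact (lt_add_one C).not_ge (hω.trans (hC _ hmem))

theorem TendstoInProb.mono (hW : TendstoInProb μ W) (hZW : ∀ N ω, |Z N ω| ≤ |W N ω|) :
    TendstoInProb μ Z := fun ε hε =>
  tendsto_of_tendsto_of_tendsto_of_le_of_le tendsto_const_nhds (hW ε hε) (fun _ => zero_le)
    fun N => measure_mono fun ω hω => le_trans hω (hZW N ω)

theorem BoundedInProb.mul_tendstoInProb (hZ : BoundedInProb μ Z) (hW : TendstoInProb μ W) :
    TendstoInProb μ (fun N ω => Z N ω * W N ω) := by
  intro ε hε
  refine ENNReal.tendsto_nhds_zero.2 fun η hη => ?_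
  have hη2 : 0 < η / 2 := ENNReal.half_pos hη.ne'
  obtain ⟨B, hB⟩ := hZ (η / 2) hη2
  obtain ⟨C, hBC, hC⟩ : ∃ C, B ≤ C ∧ 0 < C := ⟨max B 1, le_max_left _ _, by positivity⟩
  filter_upwards [hB, ENNReal.tendsto_nhds_zero.1 (hW (ε / C) (by positivity)) (η / 2) hη2]
    with N hZN hWN
  have hsubset : {ω | ε ≤ |Z N ω * W N ω|} ⊆ {ω | B ≤ |Z N ω|} ∪ {ω | ε / C ≤ |W N ω|} := by
    intro ω hω
    by_contra! hsmall
    obtain ⟨hZω, hWω⟩ : |Z N ω| < B ∧ |W N ω| < ε / C := by simpa using hsmall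
    have hlt : |Z N ω * W N ω| < ε := calc
      |Z N ω * W N ω| = |Z N ω| * |W N ω| := abs_mul _ _
      _ ≤ C * |W N ω| := by gcongr; exact hZω.le.trans hBC
      _ < C * (ε / C) := by gcongr
      _ = ε := mul_div_cancel₀ ε hC.ne'
    exact hlt.not_ge hω
  calc μ {ω | ε ≤ |Z N ω * W N ω|}
      ≤ μ {ω | B ≤ |Z N ω|} + μ {ω | ε / C ≤ |W N ω|} :=
        (measure_mono hsubset).trans (measure_union_le _ _)
    _ ≤ η / 2 + η / 2 := add_le_add hZN hWN
    _ = η := ENNReal.add_halves η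

end BoundedInProb

section EmpiricalAverage

variable {ι : Type*} (s : Finset ι)

theorem abs_expect_mul_le_sqrt_mul_sqrt (f g : ι → ℝ) :
    |𝔼 i ∈ s, f i * g i| ≤ √(𝔼 i ∈ s, f i ^ 2) * √(𝔼 i ∈ s, g i ^ 2) := by
  rw [← Real.sqrt_mul (Finset.expect_nonneg fun i _ => sq_nonneg (f i))]
  exact Real.abs_le_sqrt (Finset.expect_mul_sq_le_sq_mul_sq s f g)

theorem expect_one_add_pow_add_pow_sq_le (d : ℕ) (a b : ι → ℝ) :
    𝔼 i ∈ s, (1 + a i ^ d + b i ^ d) ^ 2 ≤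
      3 * (1 + (𝔼 i ∈ s, a i ^ (2 * d) + 𝔼 i ∈ s, b i ^ (2 * d))) := by
  have hsq (u v : ℝ) : (1 + u + v) ^ 2 ≤ 3 * (1 + (u ^ 2 + v ^ 2)) := by
    linarith [sq_nonneg (u - 1), sq_nonneg (v - 1), sq_nonneg (u - v)]
  have hone : 𝔼 _i ∈ s, (1 : ℝ) ≤ 1 := by
    obtain rfl | hs := s.eq_empty_or_nonempty
    · simp
    · exact (Finset.expect_const hs 1).le
  calc 𝔼 i ∈ s, (1 + a i ^ d + b i ^ d) ^ 2
      ≤ 𝔼 i ∈ s, 3 * (1 + (a i ^ (2 * d) + b i ^ (2 * d))) :=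
        Finset.expect_le_expect fun i _ => by simpa only [pow_mul'] using hsq (a i ^ d) (b i ^ d)
    _ = 3 * (𝔼 _i ∈ s, (1 : ℝ) + (𝔼 i ∈ s, a i ^ (2 * d) + 𝔼 i ∈ s, b i ^ (2 * d))) := by
        simp only [← Finset.mul_expect, Finset.expect_add_distrib]
    _ ≤ 3 * (1 + (𝔼 i ∈ s, a i ^ (2 * d) + 𝔼 i ∈ s, b i ^ (2 * d))) := by gcongr

theorem expect_vecNorm_pow_nonneg {k : ℕ} (x : ι → Fin k → ℝ) (m : ℕ) :
    0 ≤ 𝔼 i ∈ s, vecNorm (x i) ^ m :=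
  Finset.expect_nonneg fun _ _ => pow_nonneg (Real.sqrt_nonneg _) m

end EmpiricalAverage

theorem one_div_mul_sum_eq_expect {N : ℕ} (f : Fin N → ℝ) :
    (1 / (N : ℝ)) * ∑ i, f i = 𝔼 i, f i := by
  rw [Fintype.expect_eq_sum_div_card, Fintype.card_fin, one_div_mul_eq_div]

theorem rpow_neg_half_mul_sqrt_sum_eq_sqrt_expect {N : ℕ} (f : Fin N → ℝ) :
    (N : ℝ) ^ (-(1 / 2 : ℝ)) * √(∑ i, f i) = √(𝔼 i, f i) := by
  rw [Real.rpow_neg N.cast_nonneg, ← Real.sqrt_eq_rpow, ← one_div_mul_sum_eq_expect, one_div,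
    Real.sqrt_mul (by positivity), Real.sqrt_inv]

theorem PseudoLipschitz.exists_abs_expect_sub_expect_le {k d : ℕ} {φ : (Fin k → ℝ) → ℝ}
    (hφ : PseudoLipschitz d φ) : ∃ C : ℝ, ∀ {ι : Type*} (s : Finset ι) (x y : ι → Fin k → ℝ),
      |𝔼 i ∈ s, φ (x i) - 𝔼 i ∈ s, φ (y i)| ≤
        C * √(3 * (1 + (𝔼 i ∈ s, vecNorm (x i) ^ (2 * d) + 𝔼 i ∈ s, vecNorm (y i) ^ (2 * d)))) *
          √(𝔼 i ∈ s, vecNorm (fun l => x i l - y i l) ^ 2) := by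
  obtain ⟨L, hL⟩ := hφ
  refine ⟨|L|, fun s x y => ?_⟩
  let W i := 1 + vecNorm (x i) ^ d + vecNorm (y i) ^ d
  let D i := vecNorm (fun l => x i l - y i l)
  calc |𝔼 i ∈ s, φ (x i) - 𝔼 i ∈ s, φ (y i)|
      = |𝔼 i ∈ s, (φ (x i) - φ (y i))| := by rw [Finset.expect_sub_distrib]
    _ ≤ 𝔼 i ∈ s, |φ (x i) - φ (y i)| := Finset.abs_expect_le _ _
    _ ≤ 𝔼 i ∈ s, L * (W i * D i) :=
        Finset.expect_le_expect fun i _ => (hL (x i) (y i)).trans_eq (mul_assoc _ _ _)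
    _ ≤ |L| * |𝔼 i ∈ s, W i * D i| := by
        rw [← Finset.mul_expect, ← abs_mul]
        exact le_abs_self _
    _ ≤ |L| * (√(𝔼 i ∈ s, W i ^ 2) * √(𝔼 i ∈ s, D i ^ 2)) := by
        gcongr
        exact abs_expect_mul_le_sqrt_mul_sqrt s W D
    _ = |L| * √(𝔼 i ∈ s, W i ^ 2) * √(𝔼 i ∈ s, D i ^ 2) := (mul_assoc _ _ _).symm
    _ ≤ _ := by
        gcongr
        exact expect_one_add_pow_add_pow_sq_le s d _ _

theorem statement6_general {k d : ℕ} {Ω : Type*} [MeasurableSpace Ω] {μ : Measure Ω}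
    {ι : ℕ → Type*} [∀ N, Fintype (ι N)] {X Y : (N : ℕ) → Ω → ι N → Fin k → ℝ}
    {φ : (Fin k → ℝ) → ℝ} (hφ : PseudoLipschitz d φ)
    (hXY : TendstoInProb μ (fun N ω => √(𝔼 i, vecNorm (fun l => X N ω i l - Y N ω i l) ^ 2)))
    (hX : BoundedInProb μ (fun N ω => 𝔼 i, vecNorm (X N ω i) ^ (2 * d)))
    (hY : BoundedInProb μ (fun N ω => 𝔼 i, vecNorm (Y N ω i) ^ (2 * d))) :
    TendstoInProb μ (fun N ω => 𝔼 i, φ (X N ω i) - 𝔼 i, φ (Y N ω i)) := by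
  obtain ⟨C, hC⟩ := hφ.exists_abs_expect_sub_expect_le
  have hcont : Continuous fun t => C * √(3 * (1 + t)) := by fun_prop
  exact (((hX.add hY).continuous_comp hcont).mul_tendstoInProb hXY).mono fun N ω =>
    (hC Finset.univ (X N ω) (Y N ω)).trans (le_abs_self _)

/-- if the empirical ℓ² distance between the rows of `X_N` and `Y_N`
(normalized by `N^{-1/2}`) tends to zero in probability, and all empirical moments of the
rows of `X_N` and `Y_N` are bounded with high probability, then for every pseudo-Lipschitz
test function `φ` the difference of empirical averages tends to zero in probability. -/
theorem statement6 (k : ℕ) {Ω : Type*} [MeasureSpace Ω]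
    [IsProbabilityMeasure (volume : Measure Ω)]
    (X Y : (N : ℕ) → Ω → Fin N → Fin k → ℝ)
    (h1 : TendstoInProb (volume : Measure Ω) (fun N ω =>
      (N : ℝ) ^ (-(1/2 : ℝ)) *
        Real.sqrt (∑ i, (vecNorm (fun l => X N ω i l - Y N ω i l)) ^ 2)))
    (h2 : ∀ m : ℕ, ∃ B : ℝ, 0 < B ∧
      Tendsto (fun N : ℕ => (volume : Measure Ω)
        {ω : Ω | B ≤ (1 / (N : ℝ)) * ∑ i, (vecNorm (X N ω i)) ^ m}) atTop (nhds 0) ∧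
      Tendsto (fun N : ℕ => (volume : Measure Ω)
        {ω : Ω | B ≤ (1 / (N : ℝ)) * ∑ i, (vecNorm (Y N ω i)) ^ m}) atTop (nhds 0)) :
    ∀ φ : (Fin k → ℝ) → ℝ, (∃ d : ℕ, PseudoLipschitz d φ) →
      TendstoInProb (volume : Measure Ω) (fun N ω =>
        (1 / (N : ℝ)) * ∑ i, φ (X N ω i) - (1 / (N : ℝ)) * ∑ i, φ (Y N ω i)) := by
  rintro φ ⟨d, hφ⟩
  obtain ⟨B, -, hX, hY⟩ := h2 (2 * d)
  simp only [one_div_mul_sum_eq_expect, rpow_neg_half_mul_sqrt_sum_eq_sqrt_expect] at h1 hX hY ⊢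
  exact statement6_general hφ h1
    (.of_tendsto_measure_setOf_le (fun _ _ => expect_vecNorm_pow_nonneg _ _ _) hX)
    (.of_tendsto_measure_setOf_le (fun _ _ => expect_vecNorm_pow_nonneg _ _ _) hY)
end
end

section
/- Let c : [0,1] × ℝ → {−1, +1} be a measurable function such that the topological boundary D = ∂(c^{-1}({+1})) has Lebesgue measure zero in [0,1] × ℝ. Let (U, H) be a random pair in [0,1] × ℝ whose joint law is absolutely continuous with respect to Lebesgue measure on [0,1] × ℝ, and let (H_n) be a sequence of real random variables on the same probability space with H_n → H in probability. Then P(c(U, H_n) ≠ c(U, H)) → 0 as n → ∞. -/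
/-!
Let `r(x)` be the distance from `x` to the set where `c` differs from `c x`. Whenever
`c(Xₙ) ≠ c(X)`, the distance from `Xₙ` to `X` is at least `r(X)`, so for every `ε > 0`
`P(c(Xₙ) ≠ c(X)) ≤ P(r(X) ≤ ε) + P(d(Xₙ, X) ≥ ε)`. The function `r` is lower semicontinuous, hence
measurable, and it is positive exactly where `c` is locally constant. If `c` is almost surely
locally constant at `X`, the first term is therefore small for small `ε`, uniformly in `n`, and the
second tends to zero by convergence in probability. A two-valued `c` is locally constant off the
boundary of either of its level sets, and a random point with absolutely continuous law avoids a
Lebesgue-null boundary.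
-/

open MeasureTheory Filter

noncomputable section

section

open Metric
open scoped ENNReal Topology

section ConstancyRadius

variable {E β : Type*} [PseudoEMetricSpace E] (c : E → β)

/-- The constancy radius of `c` at `x`: the largest `r` such that `c` is constant on the open ball
of radius `r` around `x`. It takes values in `ℝ≥0∞`, being `∞` when `c` is constant. -/
def constancyRadius (x : E) : ℝ≥0∞ :=
  infEDist x {y | c y ≠ c x}

variable {c} {x y : E}

lemma constancyRadius_le_edist (h : c y ≠ c x) : constancyRadius c x ≤ edist y x :=
  (infEDist_le_edist_of_mem h).trans_eq (edist_comm x y)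

lemma constancyRadius_pos_iff : 0 < constancyRadius c x ↔ ∀ᶠ y in 𝓝 x, c y = c x := by
  rw [constancyRadius, infEDist_pos_iff_notMem_closure, mem_closure_iff_frequently]
  simp only [Set.mem_ofPred_eq, not_frequently, not_not]

variable (c) in
lemma lowerSemicontinuous_constancyRadius : LowerSemicontinuous (constancyRadius c) := by
  intro x t ht
  have h_const : ∀ᶠ y in 𝓝 x, c y = c x := constancyRadius_pos_iff.1 (zero_le.trans_lt ht)
  have h_dist : ∀ᶠ y in 𝓝 x, t < infEDist y {z | c z ≠ c x} :=
    continuous_infEDist.continuousAt.eventually_const_lt ht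
  filter_upwards [h_const, h_dist] with y hy hty
  rwa [constancyRadius, hy]

end ConstancyRadius

lemma eventually_eq_of_notMem_frontier {E β : Type*} [TopologicalSpace E] {c : E → β} {a b : β}
    (hc : ∀ y, c y = a ∨ c y = b) {x : E} (hx : x ∉ frontier {y | c y = a}) :
    ∀ᶠ y in 𝓝 x, c y = c x := by
  rw [← Set.mem_compl_iff, compl_frontier_eq_union_interior] at hx
  rcases hx with h_eq | h_ne
  · have hxa : c x = a := interior_subset (s := {y | c y = a}) h_eq
    filter_upwards [mem_interior_iff_mem_nhds.1 h_eq] with y hya using hya.trans hxa.symm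
  · have hxb : c x = b := (hc x).resolve_left (interior_subset h_ne)
    filter_upwards [mem_interior_iff_mem_nhds.1 h_ne] with y hya
    exact ((hc y).resolve_left hya).trans hxb.symm

variable {Ω : Type*} [MeasurableSpace Ω] {μ : Measure Ω}

lemma ae_notMem_of_map_absolutelyContinuous {E : Type*} [MeasurableSpace E] {ν : Measure E}
    {X : Ω → E} {s t : Set E} (hX : AEMeasurable X μ) (hν : μ.map X ≪ ν) (hst : ν (s ∩ t) = 0)
    (ht : ∀ᵐ ω ∂μ, X ω ∈ t) : ∀ᵐ ω ∂μ, X ω ∉ s := by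
  filter_upwards [ae_of_ae_map hX (measure_eq_zero_iff_ae_notMem.1 (hν hst)), ht] with ω hω hωt hωs
  exact hω ⟨hωs, hωt⟩

lemma tendsto_measure_le_nhdsGT_zero [IsFiniteMeasure μ] {f : Ω → ℝ≥0∞} (hf : AEMeasurable f μ)
    (hpos : ∀ᵐ ω ∂μ, 0 < f ω) : Tendsto (fun ε => μ {ω | f ω ≤ ε}) (𝓝[>] 0) (𝓝 0) := by
  have h_inter : μ (⋂ ε > 0, {ω | f ω ≤ ε}) = 0 := by
    refine measure_mono_null (fun ω hω => ?_) (ae_iff.1 hpos)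
    exact (le_of_forall_gt_imp_ge_of_dense (Set.mem_iInter₂.1 hω)).not_gt
  have h_lim : Tendsto (fun ε => μ {ω | f ω ≤ ε}) (𝓝[>] 0) (𝓝 (μ (⋂ ε > 0, {ω | f ω ≤ ε}))) :=
    tendsto_measure_biInter_gt (fun ε _ => hf.nullMeasurableSet_preimage measurableSet_Iic)
      (fun _ _ _ hεδ _ hω => le_trans hω hεδ) ⟨1, one_pos, measure_ne_top μ _⟩
  rwa [h_inter] at h_lim

section TendstoInMeasure

variable {ι E F : Type*} {l : Filter ι} [PseudoEMetricSpace E]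

lemma tendstoInMeasure_const_prodMk [PseudoEMetricSpace F] {U : Ω → F} {X : Ω → E}
    {Xn : ι → Ω → E} (h : TendstoInMeasure μ Xn l X) :
    TendstoInMeasure μ (fun i ω => (U ω, Xn i ω)) l (fun ω => (U ω, X ω)) := by
  simpa only [TendstoInMeasure, Prod.edist_eq, edist_self, zero_le, max_eq_right] using h

lemma tendsto_measure_le_edist [IsFiniteMeasure μ] {X : Ω → E} {Xn : ι → Ω → E} {f : Ω → ℝ≥0∞}
    (h : TendstoInMeasure μ Xn l X) (hf : AEMeasurable f μ) (hpos : ∀ᵐ ω ∂μ, 0 < f ω) :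
    Tendsto (fun i => μ {ω | f ω ≤ edist (Xn i ω) (X ω)}) l (𝓝 0) := by
  refine ENNReal.tendsto_nhds_zero.2 fun δ hδ => ?_
  obtain ⟨ε, h_small, hε⟩ : ∃ ε, μ {ω | f ω ≤ ε} ≤ δ / 2 ∧ 0 < ε :=
    ((ENNReal.tendsto_nhds_zero.1 (tendsto_measure_le_nhdsGT_zero hf hpos) _
      (ENNReal.half_pos hδ.ne')).and self_mem_nhdsWithin).exists
  filter_upwards [ENNReal.tendsto_nhds_zero.1 (h ε hε) _ (ENNReal.half_pos hδ.ne')] with i h_far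
  calc μ {ω | f ω ≤ edist (Xn i ω) (X ω)}
      ≤ μ ({ω | f ω ≤ ε} ∪ {ω | ε ≤ edist (Xn i ω) (X ω)}) :=
        measure_mono fun ω hω => (le_total (f ω) ε).imp_right fun hεf => hεf.trans hω
    _ ≤ μ {ω | f ω ≤ ε} + μ {ω | ε ≤ edist (Xn i ω) (X ω)} := measure_union_le _ _
    _ ≤ δ / 2 + δ / 2 := add_le_add h_small h_far
    _ = δ := ENNReal.add_halves δ

theorem statement9_general [IsFiniteMeasure μ] [MeasurableSpace E] [OpensMeasurableSpace E]
    {β : Type*} {c : E → β} {X : Ω → E} {Xn : ι → Ω → E} (hX : AEMeasurable X μ)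
    (hc : ∀ᵐ ω ∂μ, ∀ᶠ y in 𝓝 (X ω), c y = c (X ω)) (hXn : TendstoInMeasure μ Xn l X) :
    Tendsto (fun i => μ {ω | c (Xn i ω) ≠ c (X ω)}) l (𝓝 0) := by
  have h_meas : AEMeasurable (fun ω => constancyRadius c (X ω)) μ :=
    (lowerSemicontinuous_constancyRadius c).measurable.comp_aemeasurable hX
  have h_pos : ∀ᵐ ω ∂μ, 0 < constancyRadius c (X ω) :=
    hc.mono fun _ => constancyRadius_pos_iff.2
  exact tendsto_of_tendsto_of_tendsto_of_le_of_le tendsto_const_nhds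
    (tendsto_measure_le_edist hXn h_meas h_pos) (fun _ => zero_le)
    fun _ => measure_mono fun _ => constancyRadius_le_edist

end TendstoInMeasure

end

/-- let `c : [0,1] × ℝ → {−1,+1}` be a measurable update rule whose decision
boundary `∂(c⁻¹({+1}))` has Lebesgue measure zero in `[0,1] × ℝ`. If `(U, H)` has a law
absolutely continuous w.r.t. Lebesgue measure and `H_n → H` in probability, then
`P(c(U, H_n) ≠ c(U, H)) → 0`. -/
theorem statement9 {Ω : Type*} [MeasureSpace Ω]
    [IsProbabilityMeasure (volume : Measure Ω)]
    (c : ℝ × ℝ → ℝ) (hcmeas : Measurable c) (hcval : ∀ p, c p = 1 ∨ c p = -1)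
    (hD : volume (frontier {p : ℝ × ℝ | c p = 1} ∩ Set.Icc (0 : ℝ) 1 ×ˢ (Set.univ : Set ℝ)) = 0)
    (U H : Ω → ℝ) (hU : Measurable U) (hH : Measurable H)
    (hUrange : ∀ᵐ ω ∂(volume : Measure Ω), U ω ∈ Set.Icc (0 : ℝ) 1)
    (habs : Measure.map (fun ω => (U ω, H ω)) (volume : Measure Ω)
      ≪ (volume : Measure (ℝ × ℝ)))
    (Hn : ℕ → Ω → ℝ) (hHn : ∀ n, Measurable (Hn n))
    (hconv : ∀ ε : ℝ, 0 < ε →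
      Tendsto (fun n : ℕ => (volume : Measure Ω) {ω : Ω | ε ≤ |Hn n ω - H ω|})
        atTop (nhds 0)) :
    Tendsto (fun n : ℕ => (volume : Measure Ω) {ω : Ω | c (U ω, Hn n ω) ≠ c (U ω, H ω)})
      atTop (nhds 0) := by
  have hUH : AEMeasurable (fun ω => (U ω, H ω)) := (hU.prodMk hH).aemeasurable
  have h_frontier : ∀ᵐ ω, (U ω, H ω) ∉ frontier {p | c p = 1} :=
    ae_notMem_of_map_absolutelyContinuous hUH habs hD (hUrange.mono fun _ h => ⟨h, trivial⟩)
  exact statement9_general hUH (h_frontier.mono fun _ => eventually_eq_of_notMem_frontier hcval)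
    (tendstoInMeasure_const_prodMk (tendstoInMeasure_iff_norm.2 hconv))
end
end

section
/- Let β ≥ 0 and a ∈ ℝ. Let G be a standard Gaussian random variable and let σ be uniform on {−1, +1}, independent of G. Then E[G · tanh(β(G + aσ))] = β(1 − E[tanh²(β(G + a))]). -/
/-!
Multiplying `x` by a sign `s = ±1` turns `x * tanh (β * (x + a * s))` into
`(s * x) * tanh (β * (s * x + a))`, because `tanh` is odd. The sign `σ` is independent of the
symmetric variable `G`, so `σ * G` is again Gaussian and the sign disappears from the expectation.
Gaussian integration by parts, `E[G f(G)] = v E[f'(G)]` for `G` centred of variance `v`, then gives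
the result since `f x = tanh (β * (x + a))` has derivative `β * (1 - f x ^ 2)`.
-/

open MeasureTheory ProbabilityTheory

noncomputable section

open scoped NNReal

section RandomSign

variable {Ω : Type*} [MeasurableSpace Ω] {P : Measure Ω} [IsProbabilityMeasure P]

lemma hasLaw_mul_of_indepFun_sign {R : Type*} [Ring R] [MeasurableSpace R]
    [MeasurableSingletonClass R] [MeasurableMul₂ R] {ν : Measure R} [ν.IsNegInvariant]
    {X σ : Ω → R} (hX : HasLaw X ν P) (hσ : AEMeasurable σ P)
    (hσ_sign : ∀ᵐ ω ∂P, σ ω = 1 ∨ σ ω = -1) (hindep : IndepFun X σ P) :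
    HasLaw (fun ω => σ ω * X ω) ν P := by
  have hν : IsProbabilityMeasure ν := hX.isProbabilityMeasure_iff.1 ‹_›
  have hσ_prob : IsProbabilityMeasure (P.map σ) := Measure.isProbabilityMeasure_map hσ
  have hsign_set : MeasurableSet {s : R | s = 1 ∨ s = -1} :=
    (measurableSet_singleton 1).union (measurableSet_singleton (-1))
  have hmap : ∀ᵐ s ∂P.map σ, ν.map (s * ·) = ν := by
    filter_upwards [(ae_map_iff hσ hsign_set).2 hσ_sign] with s hs
    rcases hs with rfl | rfl
    · simp
    · simpa only [neg_one_mul, Measure.neg_def] using Measure.neg_eq_self ν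
  have hjoint : HasLaw (fun ω => (σ ω, X ω)) ((P.map σ).prod ν) P :=
    hindep.symm.hasLaw_prod ⟨hσ, rfl⟩ hX
  have hskew := (MeasurePreserving.id (P.map σ)).skew_product measurable_mul hmap
  exact (measurePreserving_snd.comp hskew).fun_comp_hasLaw hjoint

lemma mul_odd_add_mul_sign {R : Type*} [Ring R] {f : R → R} (hf : f.Odd) (x a : R) {s : R}
    (hs : s = 1 ∨ s = -1) : x * f (x + a * s) = s * x * f (s * x + a) := by
  rcases hs with rfl | rfl
  · simp
  · rw [show -1 * x + a = -(x + a * -1) by simp [add_comm], hf]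
    simp

lemma integral_mul_odd_add_mul_sign {ν : Measure ℝ} [ν.IsNegInvariant] {f : ℝ → ℝ}
    (hf : Measurable f) (hf_odd : f.Odd) (a : ℝ) {X σ : Ω → ℝ} (hX : HasLaw X ν P)
    (hσ : AEMeasurable σ P) (hσ_sign : ∀ᵐ ω ∂P, σ ω = 1 ∨ σ ω = -1) (hindep : IndepFun X σ P) :
    ∫ ω, X ω * f (X ω + a * σ ω) ∂P = ∫ x, x * f (x + a) ∂ν := by
  calc ∫ ω, X ω * f (X ω + a * σ ω) ∂P
      = ∫ ω, σ ω * X ω * f (σ ω * X ω + a) ∂P :=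
        integral_congr_ae (hσ_sign.mono fun ω hω => mul_odd_add_mul_sign hf_odd (X ω) a hω)
    _ = ∫ x, x * f (x + a) ∂ν :=
        (hasLaw_mul_of_indepFun_sign hX hσ hσ_sign hindep).integral_comp
          (f := fun x => x * f (x + a)) (by fun_prop)

end RandomSign

section GaussianIntegrationByParts

variable {m : ℝ} {v : ℝ≥0} {f f' : ℝ → ℝ}

instance isNegInvariant_gaussianReal_zero : (gaussianReal 0 v).IsNegInvariant where
  neg_eq_self := by rw [Measure.neg_def, gaussianReal_map_neg, neg_zero]

lemma hasDerivAt_gaussianPDFReal (m : ℝ) (v : ℝ≥0) (x : ℝ) :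
    HasDerivAt (gaussianPDFReal m v) (-((x - m) / v * gaussianPDFReal m v x)) x := by
  have hexponent : HasDerivAt (fun x : ℝ => -(x - m) ^ 2 / (2 * v)) (-((x - m) / v)) x := by
    refine ((((hasDerivAt_id x).sub_const m).pow 2).neg.div_const _).congr_deriv ?_
    simp only [id_eq, Nat.cast_ofNat, Nat.add_one_sub_one, pow_one, mul_one]
    field
  rw [gaussianPDFReal_def]
  exact (hexponent.exp.const_mul _).congr_deriv (by ring)

lemma integrable_gaussianReal_iff {E : Type*} [NormedAddCommGroup E] [NormedSpace ℝ E]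
    (hv : v ≠ 0) {g : ℝ → E} :
    Integrable g (gaussianReal m v) ↔ Integrable fun x => gaussianPDFReal m v x • g x := by
  rw [gaussianReal_of_var_ne_zero _ hv, integrable_withDensity_iff_integrable_smul'
    (measurable_gaussianPDF _ _) (ae_of_all _ fun _ => gaussianPDF_lt_top)]
  simp only [toReal_gaussianPDF]

lemma integrable_of_integrable_sub_mul {μ : Measure ℝ} [IsFiniteMeasure μ] (hf : Continuous f)
    (hmf : Integrable (fun x => (x - m) * f x) μ) : Integrable f μ := by
  obtain ⟨C, hC⟩ := (isCompact_closedBall m 1).exists_bound_of_continuousOn hf.continuousOn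
  refine ((integrable_const |C|).add hmf.norm).mono' hf.aestronglyMeasurable
    (ae_of_all _ fun x => ?_)
  rw [Pi.add_apply, norm_mul]
  rcases le_total ‖x - m‖ 1 with hx | hx
  · have hfC : ‖f x‖ ≤ |C| := (hC x (mem_closedBall_iff_norm.2 hx)).trans (le_abs_self C)
    exact le_add_of_le_of_nonneg hfC (by positivity)
  · exact le_add_of_nonneg_of_le (abs_nonneg C) (le_mul_of_one_le_left (norm_nonneg _) hx)

theorem integral_sub_mul_gaussianReal (hf : ∀ x, HasDerivAt f (f' x) x)
    (hmf : Integrable (fun x => (x - m) * f x) (gaussianReal m v))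
    (hf' : Integrable f' (gaussianReal m v)) :
    ∫ x, (x - m) * f x ∂gaussianReal m v = v * ∫ x, f' x ∂gaussianReal m v := by
  rcases eq_or_ne v 0 with rfl | hv
  · simp
  have hv' : (v : ℝ) ≠ 0 := NNReal.coe_ne_zero.2 hv
  have hf_int : Integrable f (gaussianReal m v) :=
    integrable_of_integrable_sub_mul
      (continuous_iff_continuousAt.2 fun x => (hf x).continuousAt) hmf
  rw [integrable_gaussianReal_iff hv] at hmf hf' hf_int
  have hparts := integral_mul_deriv_eq_deriv_mul_of_integrable
    (fun x _ => hf x) (fun x _ => hasDerivAt_gaussianPDFReal m v x)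
    ((hmf.const_mul (-(v : ℝ)⁻¹)).congr (ae_of_all _ fun x => by
      simp only [Pi.mul_apply, smul_eq_mul]
      ring))
    (hf'.congr (ae_of_all _ fun x => mul_comm _ _))
    (hf_int.congr (ae_of_all _ fun x => mul_comm _ _))
  simp only [integral_gaussianReal_eq_integral_smul hv, smul_eq_mul]
  calc ∫ x, gaussianPDFReal m v x * ((x - m) * f x)
      = -v * ∫ x, f x * -((x - m) / v * gaussianPDFReal m v x) := by
        rw [← integral_const_mul]
        congr with x
        field
    _ = v * ∫ x, gaussianPDFReal m v x * f' x := by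
        simp only [hparts, neg_mul_neg, mul_comm (f' _)]

end GaussianIntegrationByParts

section Tanh

lemma hasDerivAt_tanh (x : ℝ) : HasDerivAt Real.tanh (1 - Real.tanh x ^ 2) x := by
  have hcosh := (Real.cosh_pos x).ne'
  rw [funext Real.tanh_eq_sinh_div_cosh]
  refine ((Real.hasDerivAt_sinh x).fun_div (Real.hasDerivAt_cosh x) hcosh).congr_deriv ?_
  field

lemma continuous_tanh : Continuous Real.tanh :=
  continuous_iff_continuousAt.2 fun x => (hasDerivAt_tanh x).continuousAt

lemma hasDerivAt_tanh_mul_add (β a x : ℝ) :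
    HasDerivAt (fun x => Real.tanh (β * (x + a))) (β * (1 - Real.tanh (β * (x + a)) ^ 2)) x := by
  have hlin : HasDerivAt (fun x => β * (x + a)) β x := by
    simpa using ((hasDerivAt_id' x).add_const a).const_mul β
  exact ((hasDerivAt_tanh (β * (x + a))).comp x hlin).congr_deriv (mul_comm _ _)

lemma integral_mul_tanh_gaussianReal (v : ℝ≥0) (β a : ℝ) :
    ∫ x, x * Real.tanh (β * (x + a)) ∂gaussianReal 0 v
      = v * (β * (1 - ∫ x, Real.tanh (β * (x + a)) ^ 2 ∂gaussianReal 0 v)) := by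
  have htanh : Continuous fun x => Real.tanh (β * (x + a)) := continuous_tanh.comp (by fun_prop)
  have hid : Integrable (fun x => x) (gaussianReal 0 v) :=
    memLp_one_iff_integrable.1 (memLp_id_gaussianReal 1)
  have hmul : Integrable (fun x => (x - 0) * Real.tanh (β * (x + a))) (gaussianReal 0 v) := by
    simpa only [sub_zero] using hid.mul_bdd (c := 1) htanh.aestronglyMeasurable
      (ae_of_all _ fun _ => (Real.abs_tanh_lt_one _).le)
  have hsq : Integrable (fun x => Real.tanh (β * (x + a)) ^ 2) (gaussianReal 0 v) :=
    Integrable.of_bound (htanh.pow 2).aestronglyMeasurable 1 (ae_of_all _ fun _ => by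
      simpa only [norm_pow, Real.norm_eq_abs, sq_abs] using (Real.tanh_sq_lt_one _).le)
  have hstein := integral_sub_mul_gaussianReal (hasDerivAt_tanh_mul_add β a) hmul
    (((integrable_const 1).sub hsq).const_mul β)
  simpa [integral_const_mul, integral_sub (integrable_const 1) hsq] using hstein

end Tanh

theorem statement10_general {Ω : Type*} [MeasurableSpace Ω] {P : Measure Ω} (v : ℝ≥0) (β a : ℝ)
    {G σ : Ω → ℝ} (hG : HasLaw G (gaussianReal 0 v) P) (hσ : AEMeasurable σ P)
    (hσ_sign : ∀ᵐ ω ∂P, σ ω = 1 ∨ σ ω = -1) (hindep : IndepFun G σ P) :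
    ∫ ω, G ω * Real.tanh (β * (G ω + a * σ ω)) ∂P
      = v * (β * (1 - ∫ x, Real.tanh (β * (x + a)) ^ 2 ∂gaussianReal 0 v)) := by
  have hP : IsProbabilityMeasure P := hG.isProbabilityMeasure
  have hmeas : Measurable fun x => Real.tanh (β * x) :=
    (continuous_tanh.comp (continuous_const_mul β)).measurable
  have hodd : (fun x => Real.tanh (β * x)).Odd := fun x => by
    simp only [mul_neg, Real.tanh_neg]
  rw [integral_mul_odd_add_mul_sign hmeas hodd a hG hσ hσ_sign hindep,
    integral_mul_tanh_gaussianReal]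

/-- if `G` is standard Gaussian and `σ` is uniform on `{−1,+1}`,
independent of `G`, then for `β ≥ 0` and `a ∈ ℝ`,
`E[G · tanh(β(G + aσ))] = β(1 − E[tanh²(β(G + a))])`. -/
theorem statement10 {Ω : Type*} [MeasureSpace Ω]
    [IsProbabilityMeasure (volume : Measure Ω)]
    (β a : ℝ) (hβ : 0 ≤ β)
    (G σ : Ω → ℝ) (hG : Measurable G) (hσ : Measurable σ)
    (hGlaw : Measure.map G (volume : Measure Ω) = gaussianReal 0 1)
    (hσval : ∀ ω, σ ω = 1 ∨ σ ω = -1)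
    (hσunif : (volume : Measure Ω) {ω : Ω | σ ω = 1} = 1/2)
    (hindep : IndepFun G σ (volume : Measure Ω)) :
    (∫ ω, G ω * Real.tanh (β * (G ω + a * σ ω)) ∂(volume : Measure Ω))
      = β * (1 - ∫ x, (Real.tanh (β * (x + a))) ^ 2 ∂(gaussianReal 0 1)) := by
  simpa using statement10_general 1 β a ⟨hG.aemeasurable, hGlaw⟩ hσ.aemeasurable
    (ae_of_all _ hσval) hindep
end
end

section
/- Let N ∈ ℕ, u ∈ ℝ^N, and set Σ_u = (‖u‖₂² I_N + u uᵀ)/N. Let D ∈ ℝ^{N×N} be a diagonal matrix with entries in {0, 1} (a coordinate projection), and let P ∈ ℝ^{N×N} be an orthogonal projection matrix satisfying P D = D P = P and P u = 0. Let X and Y be independent centered Gaussian vectors in ℝ^N, each with covariance matrix Σ_u. Then D(I − P)X + P Y is a centered Gaussian vector in ℝ^N with covariance matrix D Σ_u D. -/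
/-!
Since `DP = P`, we have `DX = D(I - P)X + PX`. The matrix `Σ_u` is a combination of `I` and `uuᵀ`,
and both commute with the symmetric `P` because `Pu = 0`. Hence `(I - P) Σ_u P = 0`, which says that
`D(I - P)X` and `PX` are uncorrelated. Replacing `PX` by `PY`, which has the same covariance and is
independent of `X`, therefore leaves the covariance `D Σ_u Dᵀ` of the sum unchanged.
-/

open MeasureTheory ProbabilityTheory Matrix

noncomputable section

/-- The covariance matrix `Σ_u = (‖u‖₂² I_N + u uᵀ)/N`. -/
def SigmaU (N : ℕ) (u : Fin N → ℝ) : Matrix (Fin N) (Fin N) ℝ :=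
  (N : ℝ)⁻¹ • ((∑ k, (u k) ^ 2) • (1 : Matrix (Fin N) (Fin N) ℝ) + Matrix.vecMulVec u u)

/-- `Z` is a centered Gaussian random vector with covariance matrix `Σ`: every linear
functional `⟨a, Z⟩` has the centered Gaussian law with variance `aᵀ Σ a`. -/
def IsCenteredGaussianWithCov {Ω : Type*} [MeasureSpace Ω] {N : ℕ}
    (Z : Ω → Fin N → ℝ) (Sig : Matrix (Fin N) (Fin N) ℝ) : Prop :=
  ∀ a : Fin N → ℝ,
    Measure.map (fun ω => ∑ i, a i * Z ω i) (volume : Measure Ω)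
      = gaussianReal 0 (Real.toNNReal (∑ i, ∑ j, a i * Sig i j * a j))

lemma mul_one_sub_mul_mul_transpose_add {n R : Type*} [Fintype n] [DecidableEq n] [CommRing R]
    {D P S : Matrix n n R} (hPsymm : P.IsSymm) (hPidem : IsIdempotentElem P) (hDP : D * P = P)
    (hPS : Commute P S) :
    D * (1 - P) * S * (D * (1 - P))ᵀ + P * S * Pᵀ = D * S * Dᵀ := by
  set A := D * (1 - P) with hA
  have hD : D = A + P := by rw [hA, mul_sub, mul_one, hDP, sub_add_cancel]
  have hAP : A * P = 0 := by rw [hA, mul_assoc, hPidem.one_sub_mul_self, mul_zero]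
  have hPA : P * Aᵀ = 0 := by
    simpa only [transpose_mul, hPsymm.eq, transpose_zero] using congrArg transpose hAP
  have hASP : A * S * Pᵀ = 0 := by
    rw [hPsymm.eq, mul_assoc, ← hPS.eq, ← mul_assoc, hAP, zero_mul]
  have hPSA : P * S * Aᵀ = 0 := by rw [hPS.eq, mul_assoc, hPA, mul_zero]
  calc A * S * Aᵀ + P * S * Pᵀ = (A + P) * S * (A + P)ᵀ := by
        simp only [transpose_add, add_mul, mul_add, hASP, hPSA, add_zero, zero_add]
    _ = D * S * Dᵀ := by rw [← hD]

lemma commute_vecMulVec_self_of_mulVec_eq_zero {n R : Type*} [Fintype n]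
    [NonUnitalCommSemiring R] {P : Matrix n n R} {u : n → R} (hPsymm : P.IsSymm)
    (hPu : P *ᵥ u = 0) : Commute P (vecMulVec u u) := by
  have huP : u ᵥ* P = 0 := by rw [← mulVec_transpose, hPsymm.eq, hPu]
  rw [commute_iff_eq, mul_vecMulVec, vecMulVec_mul, hPu, huP, zero_vecMulVec, vecMulVec_zero]

lemma posSemidef_SigmaU {N : ℕ} (u : Fin N → ℝ) : (SigmaU N u).PosSemidef :=
  ((PosSemidef.one.smul (Finset.sum_nonneg fun k _ => sq_nonneg (u k))).add
    (posSemidef_vecMulVec_self_star u)).smul (inv_nonneg.2 N.cast_nonneg)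

lemma commute_SigmaU_of_mulVec_eq_zero {N : ℕ} {u : Fin N → ℝ} {P : Matrix (Fin N) (Fin N) ℝ}
    (hPsymm : P.IsSymm) (hPu : P *ᵥ u = 0) : Commute P (SigmaU N u) :=
  (((Commute.one_right P).smul_right _).add_right
    (commute_vecMulVec_self_of_mulVec_eq_zero hPsymm hPu)).smul_right _

section Gaussian

variable {Ω : Type*} [MeasureSpace Ω] {M N : ℕ} {X Y : Ω → Fin N → ℝ}
  {S T : Matrix (Fin N) (Fin N) ℝ}

lemma isCenteredGaussianWithCov_iff :
    IsCenteredGaussianWithCov X S ↔ ∀ a : Fin N → ℝ,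
      Measure.map (fun ω => a ⬝ᵥ X ω) volume = gaussianReal 0 (a ⬝ᵥ S *ᵥ a).toNNReal := by
  simp only [IsCenteredGaussianWithCov, ← toBilin'_apply, toBilin'_apply']
  rfl

namespace IsCenteredGaussianWithCov

lemma mulVec (hX : IsCenteredGaussianWithCov X S) (A : Matrix (Fin M) (Fin N) ℝ) :
    IsCenteredGaussianWithCov (fun ω => A *ᵥ X ω) (A * S * Aᵀ) := by
  rw [isCenteredGaussianWithCov_iff] at hX ⊢
  intro a
  simpa only [← mulVec_mulVec, mulVec_transpose, dotProduct_mulVec] using hX (a ᵥ* A)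

lemma add_of_indepFun (hX : IsCenteredGaussianWithCov X S) (hY : IsCenteredGaussianWithCov Y T)
    (hS : S.PosSemidef) (hT : T.PosSemidef) (hXY : IndepFun X Y) :
    IsCenteredGaussianWithCov (fun ω => X ω + Y ω) (S + T) := by
  rw [isCenteredGaussianWithCov_iff] at hX hY ⊢
  intro a
  have ha : Measurable fun x : Fin N → ℝ => a ⬝ᵥ x := by fun_prop
  have hsum := gaussianReal_add_gaussianReal_of_indepFun (hXY.comp ha ha) (hX a) (hY a)
  have hSa : 0 ≤ a ⬝ᵥ S *ᵥ a := hS.dotProduct_mulVec_nonneg a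
  have hTa : 0 ≤ a ⬝ᵥ T *ᵥ a := hT.dotProduct_mulVec_nonneg a
  rw [add_zero, ← Real.toNNReal_add hSa hTa, ← dotProduct_add, ← add_mulVec] at hsum
  simp only [dotProduct_add]
  exact hsum

end IsCenteredGaussianWithCov

end Gaussian

theorem statement14_general {N : ℕ} {Ω : Type*} [MeasureSpace Ω]
    {D P S : Matrix (Fin N) (Fin N) ℝ} (hS : S.PosSemidef) (hPsymm : P.IsSymm)
    (hPidem : IsIdempotentElem P) (hDP : D * P = P) (hPS : Commute P S) {X Y : Ω → Fin N → ℝ}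
    (hX : IsCenteredGaussianWithCov X S) (hY : IsCenteredGaussianWithCov Y S)
    (hXY : IndepFun X Y) :
    IsCenteredGaussianWithCov (fun ω => D *ᵥ ((1 - P) *ᵥ X ω) + P *ᵥ Y ω) (D * S * Dᵀ) := by
  have hmeas (A : Matrix (Fin N) (Fin N) ℝ) : Measurable fun x => A *ᵥ x := by fun_prop
  simp only [mulVec_mulVec]
  rw [← mul_one_sub_mul_mul_transpose_add hPsymm hPidem hDP hPS]
  exact (hX.mulVec (D * (1 - P))).add_of_indepFun (hY.mulVec P)
    (hS.mul_mul_conjTranspose_same _) (hS.mul_mul_conjTranspose_same _)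
    (hXY.comp (hmeas _) (hmeas _))

/-- let `D` be a 0-1 diagonal (coordinate projection) matrix and `P` an
orthogonal projection with `P D = D P = P` and `P u = 0`. If `X` and `Y` are independent
centered Gaussian vectors, each with covariance `Σ_u = (‖u‖₂² I + u uᵀ)/N`, then
`D(I − P)X + P Y` is a centered Gaussian vector with covariance `D Σ_u D`. -/
theorem statement14 (N : ℕ) (u : Fin N → ℝ) {Ω : Type*} [MeasureSpace Ω]
    [IsProbabilityMeasure (volume : Measure Ω)]
    (D P : Matrix (Fin N) (Fin N) ℝ)
    (hDoffdiag : ∀ i j, i ≠ j → D i j = 0)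
    (hDdiag : ∀ i, D i i = 0 ∨ D i i = 1)
    (hPsymm : P.IsSymm) (hPidem : P * P = P)
    (hPD : P * D = P) (hDP : D * P = P)
    (hPu : P.mulVec u = 0)
    (X Y : Ω → Fin N → ℝ) (hX : Measurable X) (hY : Measurable Y)
    (hXlaw : IsCenteredGaussianWithCov X (SigmaU N u))
    (hYlaw : IsCenteredGaussianWithCov Y (SigmaU N u))
    (hindep : IndepFun X Y (volume : Measure Ω)) :
    IsCenteredGaussianWithCov
      (fun ω => D.mulVec ((1 - P).mulVec (X ω)) + P.mulVec (Y ω))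
      (D * SigmaU N u * D) := by
  have hD : D.IsSymm := IsDiag.isSymm hDoffdiag
  simpa only [hD.eq] using statement14_general (posSemidef_SigmaU u) hPsymm hPidem hDP
    (commute_SigmaU_of_mulVec_eq_zero hPsymm hPu) hXlaw hYlaw hindep
end
end
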